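/- Let a = so₅(k), the 10-dimensional orthogonal Lie algebra of rank 2. There exists a nilpotent element x ∈ a with dim a_x = 4 (a subregular nilpotent element, namely a short root vector) such that the set I(a_x) := {y ∈ a_x : dim (a_x)_y > 2} is a 3-dimensional linear subspace of a_x; in particular codim_{a_x} I(a_x) = 1. -/

import Mathlib

noncomputable section

open Module

/-!
Over an algebraically closed field of characteristic not two all nondegenerate symmetric forms are
congruent, so `J` may be taken antidiagonal. There the centralizer of a vector `x` of the short root
`ε₁` is `k h ⊕ W`, where `h` spans the part of the diagonal torus killed by `ε₁` and `W` is spanned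
by root vectors for `ε₁ - ε₂`, `ε₁ + ε₂` and `ε₁`. The hyperplane `W` is abelian and `ad h` acts on
it with eigenvalues `-1, 1, 0`. An element of `W` therefore commutes with all of `W`, while the
centralizer in `k h ⊕ W` of an element `y` outside `W` is `k y ⊕ (W ∩ ker (ad h)) = k y ⊕ k x`.
-/

theorem span_singleton_sup_eq_of_mem_of_notMem {K V : Type*} [DivisionRing K] [AddCommGroup V]
    [Module K V] {W : Submodule K V} {x y : V} (hy : y ∈ K ∙ x ⊔ W) (hyW : y ∉ W) :
    K ∙ y ⊔ W = K ∙ x ⊔ W := by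
  have hle : K ∙ y ⊔ W ≤ K ∙ x ⊔ W :=
    sup_le ((Submodule.span_singleton_le_iff_mem _ _).2 hy) le_sup_right
  have hne : K ∙ y ⊔ W ≠ W := by simpa using hyW
  exact ((Submodule.wcovBy_span_singleton_sup x W).eq_or_eq le_sup_right hle).resolve_left hne

section LieAlgebra

variable {K L L' : Type*} [Field K] [LieRing L] [LieAlgebra K L] [LieRing L'] [LieAlgebra K L']

variable (K) in
/-- The set `I(L_x) = {y ∈ L_x | dim (L_x)_y > d}` of elements of the centralizer `L_x` of `x` whose
own centralizer in `L_x` has dimension larger than `d`. For `d` the index of `L_x`, these are the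
irregular elements of `L_x`. Centralizers are encoded as kernels of `ad`. -/
def irregularLocus (d : ℕ) (x : L) : Set L :=
  {y | y ∈ LinearMap.ker (LieAlgebra.ad K L x) ∧
    d < finrank K ↥(LinearMap.ker (LieAlgebra.ad K L x) ⊓ LinearMap.ker (LieAlgebra.ad K L y))}

theorem ker_ad_lieEquiv_apply (e : L ≃ₗ⁅K⁆ L') (x : L) :
    LinearMap.ker (LieAlgebra.ad K L' (e x)) =
      (LinearMap.ker (LieAlgebra.ad K L x)).map (e.toLinearEquiv : L →ₗ[K] L') := by
  ext y
  rw [Submodule.mem_map_equiv]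
  obtain ⟨z, rfl⟩ := e.toLinearEquiv.surjective y
  rw [LinearEquiv.symm_apply_apply]
  change ⁅e x, e z⁆ = 0 ↔ ⁅x, z⁆ = 0
  rw [← LieEquiv.map_lie, map_eq_zero_iff e e.injective]

theorem irregularLocus_lieEquiv_apply (e : L ≃ₗ⁅K⁆ L') (d : ℕ) (x : L) :
    irregularLocus K d (e x) = e '' irregularLocus K d x := by
  ext y
  obtain ⟨z, rfl⟩ : ∃ z, e z = y := e.surjective y
  have hinj : Function.Injective e := e.injective
  rw [hinj.mem_set_image, irregularLocus, irregularLocus, Set.mem_ofPred_eq, Set.mem_ofPred_eq,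
    ker_ad_lieEquiv_apply, ker_ad_lieEquiv_apply,
    ← Submodule.map_inf _ e.toLinearEquiv.injective, LinearEquiv.finrank_map_eq]
  exact and_congr_left' (hinj.mem_set_image (s := LinearMap.ker (LieAlgebra.ad K L x)))

theorem inf_ker_ad_smul_add {W : Submodule K L} (hW : ∀ u ∈ W, ∀ v ∈ W, ⁅u, v⁆ = 0)
    {t : K} (ht : t ≠ 0) (h : L) {w : L} (hw : w ∈ W) :
    W ⊓ LinearMap.ker (LieAlgebra.ad K L (t • h + w)) =
      W ⊓ LinearMap.ker (LieAlgebra.ad K L h) := by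
  ext z
  simp only [Submodule.mem_inf, LinearMap.mem_ker, LieAlgebra.ad_apply]
  refine and_congr_right fun hz ↦ ?_
  rw [add_lie, smul_lie, hW w hw z hz, add_zero, smul_eq_zero_iff_right ht]

theorem span_singleton_sup_inf_ker_ad (W : Submodule K L) (y : L) :
    (K ∙ y ⊔ W) ⊓ LinearMap.ker (LieAlgebra.ad K L y) =
      K ∙ y ⊔ W ⊓ LinearMap.ker (LieAlgebra.ad K L y) :=
  sup_inf_assoc_of_le W (by simp)

theorem span_singleton_sup_inf_ker_ad_of_notMem {W : Submodule K L}
    (hW : ∀ u ∈ W, ∀ v ∈ W, ⁅u, v⁆ = 0) {h y : L} (hy : y ∈ K ∙ h ⊔ W) (hyW : y ∉ W) :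
    (K ∙ h ⊔ W) ⊓ LinearMap.ker (LieAlgebra.ad K L y) =
      K ∙ y ⊔ W ⊓ LinearMap.ker (LieAlgebra.ad K L h) := by
  rw [← span_singleton_sup_eq_of_mem_of_notMem hy hyW, span_singleton_sup_inf_ker_ad]
  obtain ⟨t, w, hw, rfl⟩ : ∃ t : K, ∃ w ∈ W, t • h + w = y := by
    simpa [Submodule.mem_sup, Submodule.mem_span_singleton] using hy
  have ht : t ≠ 0 := by
    rintro rfl
    exact hyW (by simpa using hw)
  rw [inf_ker_ad_smul_add hW ht h hw]

theorem irregularLocus_eq_of_abelian_hyperplane {W : Submodule K L}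
    (hW : ∀ u ∈ W, ∀ v ∈ W, ⁅u, v⁆ = 0) {h x : L} {d : ℕ}
    (hx : LinearMap.ker (LieAlgebra.ad K L x) = K ∙ h ⊔ W)
    (hh : finrank K ↥(W ⊓ LinearMap.ker (LieAlgebra.ad K L h)) < d) (hd : d < finrank K W) :
    irregularLocus K d x = W := by
  have : FiniteDimensional K W := .of_finrank_pos (by lia)
  ext y
  rw [irregularLocus, Set.mem_ofPred_eq, SetLike.mem_coe, hx]
  constructor
  · rintro ⟨hy, hdy⟩
    by_contra hyW
    rw [span_singleton_sup_inf_ker_ad_of_notMem hW hy hyW] at hdy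
    have hsup := Submodule.finrank_add_le_finrank_add_finrank (K ∙ y)
      (W ⊓ LinearMap.ker (LieAlgebra.ad K L h))
    have hline : finrank K (K ∙ y) = 1 := finrank_span_singleton fun h0 ↦ hyW (h0 ▸ W.zero_mem)
    lia
  · intro hy
    have hle : W ≤ (K ∙ h ⊔ W) ⊓ LinearMap.ker (LieAlgebra.ad K L y) :=
      le_inf le_sup_right fun z hz ↦ hW y hy z hz
    exact ⟨le_sup_right (a := K ∙ h) hy, hd.trans_le (Submodule.finrank_mono hle)⟩

end LieAlgebra

section Congruence

open scoped Matrix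

variable {K ι : Type*} [Field K] [Fintype ι] [DecidableEq ι]

theorem associated_toQuadraticForm' [Invertible (2 : K)] {A : Matrix ι ι K} (hA : A.IsSymm) :
    QuadraticMap.associated A.toQuadraticForm' = Matrix.toBilin' A :=
  QuadraticMap.associated_left_inverse (S := K) (Matrix.isSymm_toBilin'_iff_isSymm.2 hA).eq

theorem toMatrix'_toQuadraticForm' [Invertible (2 : K)] {A : Matrix ι ι K} (hA : A.IsSymm) :
    A.toQuadraticForm'.toMatrix' = A := by
  rw [QuadraticForm.toMatrix', associated_toQuadraticForm' hA]
  exact LinearMap.BilinForm.toMatrix'_toBilin' A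

theorem separatingLeft_associated_toQuadraticForm' [Invertible (2 : K)] {A : Matrix ι ι K}
    (hA : A.IsSymm) (hA' : IsUnit A) :
    (QuadraticMap.associated (R := K) A.toQuadraticForm').SeparatingLeft := by
  rw [associated_toQuadraticForm' hA]
  exact (LinearMap.BilinForm.nondegenerate_toBilin'_iff_det_ne_zero.2
    ((Matrix.isUnit_iff_isUnit_det A).1 hA').ne_zero).1

theorem exists_isUnit_transpose_mul_mul_eq [IsAlgClosed K] [NeZero (2 : K)] {A B : Matrix ι ι K}
    (hA : A.IsSymm) (hA' : IsUnit A) (hB : B.IsSymm) (hB' : IsUnit B) :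
    ∃ P : Matrix ι ι K, IsUnit P ∧ Pᵀ * A * P = B := by
  have : Invertible (2 : K) := invertibleOfNonzero two_ne_zero
  obtain ⟨f⟩ := QuadraticForm.equivalent_of_isAlgClosed _ _
    (separatingLeft_associated_toQuadraticForm' hB hB')
    (separatingLeft_associated_toQuadraticForm' hA hA')
  have hcomp : A.toQuadraticForm'.comp f.toLinearEquiv.toLinearMap = B.toQuadraticForm' :=
    QuadraticMap.ext f.map_app
  refine ⟨LinearMap.toMatrix' f.toLinearEquiv.toLinearMap, ?_, ?_⟩
  · rw [LinearMap.isUnit_toMatrix'_iff]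
    exact (Module.End.isUnit_iff _).2 f.toLinearEquiv.bijective
  · have := QuadraticForm.toMatrix'_comp A.toQuadraticForm' f.toLinearEquiv.toLinearMap
    rw [hcomp, toMatrix'_toQuadraticForm' hA, toMatrix'_toQuadraticForm' hB] at this
    exact this.symm

theorem isNilpotent_units_conj {M : Type*} [MonoidWithZero M] (u : Mˣ) {x : M}
    (hx : IsNilpotent x) :
    IsNilpotent ((↑u⁻¹ : M) * x * u) := by
  obtain ⟨n, hn⟩ := hx
  exact ⟨n, by rw [Units.conj_pow', hn, mul_zero, zero_mul]⟩

theorem isNilpotent_skewAdjointMatricesLieSubalgebraEquiv_apply {R : Type*} [CommRing R]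
    (J P : Matrix ι ι R) (hP : Invertible P) {x : skewAdjointMatricesLieSubalgebra J}
    (hx : IsNilpotent (x : Matrix ι ι R)) :
    IsNilpotent (skewAdjointMatricesLieSubalgebraEquiv J P hP x : Matrix ι ι R) := by
  rw [skewAdjointMatricesLieSubalgebraEquiv_apply, ← Matrix.invOf_eq_nonsing_inv]
  exact isNilpotent_units_conj (unitOfInvertible P) hx

end Congruence

section Antidiagonal

/-- The Gram matrix, with ones on the antidiagonal, of the split form `∑ᵢ xᵢ y₍ₙ₋₁₋ᵢ₎`. In this
basis the diagonal and the upper triangular matrices of the orthogonal Lie algebra are a Cartan and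
a Borel subalgebra. -/
def antidiagonalForm (n : ℕ) (R : Type*) [Zero R] [One R] : Matrix (Fin n) (Fin n) R :=
  Fin.revPerm.permMatrix R

variable {n : ℕ} {R : Type*} [CommRing R]

theorem antidiagonalForm_isSymm : (antidiagonalForm n R).IsSymm := by
  rw [Matrix.IsSymm, antidiagonalForm, Matrix.transpose_permMatrix, Equiv.Perm.inv_def,
    Fin.revPerm_symm]

theorem antidiagonalForm_mul_self : antidiagonalForm n R * antidiagonalForm n R = 1 := by
  rw [antidiagonalForm, ← Matrix.permMatrix_mul, ← Matrix.permMatrix_one]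
  congr 1
  ext i
  simp

theorem mem_skewAdjointMatricesLieSubalgebra_antidiagonalForm {A : Matrix (Fin n) (Fin n) R} :
    A ∈ skewAdjointMatricesLieSubalgebra (antidiagonalForm n R) ↔
      ∀ i j, A i j = -A j.rev i.rev := by
  rw [mem_skewAdjointMatricesLieSubalgebra, mem_skewAdjointMatricesSubmodule,
    Matrix.IsSkewAdjoint, Matrix.IsAdjointPair, antidiagonalForm, PEquiv.mul_toMatrix_toPEquiv,
    PEquiv.toMatrix_toPEquiv_mul, ← Matrix.ext_iff, forall_comm]
  constructor
  · exact fun h i j ↦ by simpa using h i.rev j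
  · exact fun h i j ↦ by simpa using h i.rev j

theorem apply_rev_eq_zero_of_mem_skewAdjointMatricesLieSubalgebra_antidiagonalForm
    [NoZeroDivisors R] [NeZero (2 : R)] {A : Matrix (Fin n) (Fin n) R}
    (hA : A ∈ skewAdjointMatricesLieSubalgebra (antidiagonalForm n R)) (i : Fin n) :
    A i i.rev = 0 := by
  have hneg := mem_skewAdjointMatricesLieSubalgebra_antidiagonalForm.1 hA i i.rev
  rw [Fin.rev_rev] at hneg
  have htwo : 2 * A i i.rev = 0 := by linear_combination hneg
  exact (mul_eq_zero.1 htwo).resolve_left two_ne_zero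

end Antidiagonal

section ShortRoot

variable {R : Type*} [CommRing R]

/-- The general element of the centralizer of the short root vector `shortRootVector`: the
coordinates `p 0, p 1, p 2, p 3` belong to the weights `0`, `ε₁ - ε₂`, `ε₁ + ε₂` and `ε₁`. -/
def shortRootCentralizerMatrix : (Fin 4 → R) →ₗ[R] Matrix (Fin 5) (Fin 5) R where
  toFun p :=
    !![0, p 1, p 3,  p 2,    0;
       0, p 0,   0,    0, -p 2;
       0,   0,   0,    0, -p 3;
       0,   0,   0, -p 0, -p 1;
       0,   0,   0,    0,    0]
  map_add' p q := by
    ext i j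
    fin_cases i <;> fin_cases j <;> simp [add_comm]
  map_smul' c p := by
    ext i j
    fin_cases i <;> fin_cases j <;> simp

theorem shortRootCentralizerMatrix_mem (p : Fin 4 → R) :
    shortRootCentralizerMatrix p ∈ skewAdjointMatricesLieSubalgebra (antidiagonalForm 5 R) := by
  rw [mem_skewAdjointMatricesLieSubalgebra_antidiagonalForm]
  intro i j
  fin_cases i <;> fin_cases j <;> simp [shortRootCentralizerMatrix, Fin.rev]

theorem lie_shortRootCentralizerMatrix (p q : Fin 4 → R) :
    ⁅shortRootCentralizerMatrix p, shortRootCentralizerMatrix q⁆ =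
      shortRootCentralizerMatrix ![0, p 1 * q 0 - p 0 * q 1, p 0 * q 2 - p 2 * q 0, 0] := by
  ext i j
  fin_cases i <;> fin_cases j <;>
    simp [shortRootCentralizerMatrix, Ring.lie_def] <;> ring

theorem shortRootCentralizerMatrix_injective :
    Function.Injective (shortRootCentralizerMatrix (R := R)) := by
  intro p q hpq
  have hentry (i j : Fin 5) :
      shortRootCentralizerMatrix p i j = shortRootCentralizerMatrix q i j := by rw [hpq]
  ext i
  fin_cases i
  · exact hentry 1 1
  · exact hentry 0 1
  · exact hentry 0 3
  · exact hentry 0 2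

theorem shortRootCentralizerMatrix_single_pow (t : R) :
    shortRootCentralizerMatrix (Pi.single 3 t) ^ 3 = 0 := by
  ext i j
  fin_cases i <;> fin_cases j <;> simp [shortRootCentralizerMatrix, pow_succ]

theorem eq_shortRootCentralizerMatrix_of_lie_eq_zero [NoZeroDivisors R] [NeZero (2 : R)]
    {A : Matrix (Fin 5) (Fin 5) R}
    (hA : A ∈ skewAdjointMatricesLieSubalgebra (antidiagonalForm 5 R))
    (hcomm : ⁅shortRootCentralizerMatrix (Pi.single 3 (1 : R)), A⁆ = 0) :
    A = shortRootCentralizerMatrix ![A 1 1, A 0 1, A 0 3, A 0 2] := by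
  have hanti (i : Fin 5) : A i i.rev = 0 :=
    apply_rev_eq_zero_of_mem_skewAdjointMatricesLieSubalgebra_antidiagonalForm hA i
  have hskew := mem_skewAdjointMatricesLieSubalgebra_antidiagonalForm.1 hA
  have hzero {i j : Fin 5} (hij : A i j = 0) : A j.rev i.rev = 0 :=
    neg_eq_zero.1 ((hskew i j).symm.trans hij)
  have hentry (i j : Fin 5) :
      ((shortRootCentralizerMatrix (Pi.single 3 (1 : R)) : Matrix _ _ R) * A) i j =
        (A * shortRootCentralizerMatrix (Pi.single 3 (1 : R)) : Matrix _ _ R) i j := by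
    rw [sub_eq_zero.1 hcomm]
  obtain ⟨h20, h21, h22, h23, -⟩ :
      A 2 0 = 0 ∧ A 2 1 = 0 ∧ A 2 2 = A 0 0 ∧ A 2 3 = 0 ∧ A 2 4 = -A 0 2 := by
    simpa [Fin.forall_fin_succ, shortRootCentralizerMatrix, Matrix.mul_apply, Fin.sum_univ_five]
      using hentry 0
  have h10 : A 1 0 = 0 := by
    simpa [shortRootCentralizerMatrix, Matrix.mul_apply, Fin.sum_univ_five] using (hentry 1 2).symm
  have h30 : A 3 0 = 0 := by
    simpa [shortRootCentralizerMatrix, Matrix.mul_apply, Fin.sum_univ_five] using (hentry 3 2).symm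
  have h00 : A 0 0 = 0 := h22.symm.trans (hanti 2)
  have h44 : A 4 4 = 0 := hzero h00
  have h42 : A 4 2 = 0 := hzero h20
  have h32 : A 3 2 = 0 := hzero h21
  have h12 : A 1 2 = 0 := hzero h23
  have h43 : A 4 3 = 0 := hzero h10
  have h41 : A 4 1 = 0 := hzero h30
  ext i j
  fin_cases i <;> fin_cases j <;>
    first | rfl | assumption | exact hanti _ | exact hskew _ _

variable (R) in
/-- The parametrization `shortRootCentralizerMatrix`, with values in the orthogonal Lie algebra. -/
def shortRootCentralizerMap :
    (Fin 4 → R) →ₗ[R] skewAdjointMatricesLieSubalgebra (antidiagonalForm 5 R) where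
  toFun p := ⟨shortRootCentralizerMatrix p, shortRootCentralizerMatrix_mem p⟩
  map_add' p q := Subtype.ext (map_add _ p q)
  map_smul' c p := Subtype.ext (map_smul _ c p)

variable (R) in
/-- The root vector `E₀₂ - E₂₄` for the short root `ε₁`. -/
def shortRootVector : skewAdjointMatricesLieSubalgebra (antidiagonalForm 5 R) :=
  shortRootCentralizerMap R (Pi.single 3 1)

variable (R) in
/-- The nilradical of the centralizer of `shortRootVector`, spanned by the root vectors for the
roots `ε₁ - ε₂`, `ε₁ + ε₂` and `ε₁`. -/
def shortRootNilradical :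
    Submodule R (skewAdjointMatricesLieSubalgebra (antidiagonalForm 5 R)) :=
  (LinearMap.ker (LinearMap.proj 0 : (Fin 4 → R) →ₗ[R] R)).map (shortRootCentralizerMap R)

theorem shortRootCentralizerMap_injective : Function.Injective (shortRootCentralizerMap R) :=
  fun _ _ hpq ↦ shortRootCentralizerMatrix_injective (congrArg Subtype.val hpq)

theorem lie_shortRootCentralizerMap (p q : Fin 4 → R) :
    ⁅shortRootCentralizerMap R p, shortRootCentralizerMap R q⁆ =
      shortRootCentralizerMap R ![0, p 1 * q 0 - p 0 * q 1, p 0 * q 2 - p 2 * q 0, 0] :=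
  Subtype.ext (lie_shortRootCentralizerMatrix p q)

theorem isNilpotent_shortRootVector :
    IsNilpotent (shortRootVector R : Matrix (Fin 5) (Fin 5) R) :=
  ⟨3, shortRootCentralizerMatrix_single_pow 1⟩

theorem ker_ad_shortRootVector [NoZeroDivisors R] [NeZero (2 : R)] :
    LinearMap.ker (LieAlgebra.ad R _ (shortRootVector R)) =
      LinearMap.range (shortRootCentralizerMap R) := by
  ext y
  constructor
  · intro hy
    exact ⟨_, Subtype.ext (eq_shortRootCentralizerMatrix_of_lie_eq_zero y.2
      (congrArg Subtype.val hy)).symm⟩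
  · rintro ⟨p, rfl⟩
    simp [shortRootVector, lie_shortRootCentralizerMap, ← Matrix.zero_empty]

theorem lie_eq_zero_of_mem_shortRootNilradical
    {u v : skewAdjointMatricesLieSubalgebra (antidiagonalForm 5 R)}
    (hu : u ∈ shortRootNilradical R) (hv : v ∈ shortRootNilradical R) : ⁅u, v⁆ = 0 := by
  obtain ⟨p, hp : p 0 = 0, rfl⟩ := hu
  obtain ⟨q, hq : q 0 = 0, rfl⟩ := hv
  rw [lie_shortRootCentralizerMap, hp, hq]
  simp [← Matrix.zero_empty]

theorem shortRootNilradical_inf_ker_ad_le :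
    shortRootNilradical R ⊓
        LinearMap.ker (LieAlgebra.ad R _ (shortRootCentralizerMap R (Pi.single 0 1))) ≤
      R ∙ shortRootVector R := by
  rintro _ ⟨⟨q, hq : q 0 = 0, rfl⟩, hcomm⟩
  rw [SetLike.mem_coe, LinearMap.mem_ker, LieAlgebra.ad_apply, lie_shortRootCentralizerMap,
    map_eq_zero_iff _ shortRootCentralizerMap_injective] at hcomm
  have hq1 : q 1 = 0 := by simpa using congrFun hcomm 1
  have hq2 : q 2 = 0 := by simpa using congrFun hcomm 2
  have hq3 : q = q 3 • Pi.single 3 1 := by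
    ext i
    fin_cases i <;> simp [hq, hq1, hq2]
  rw [hq3, map_smul]
  exact Submodule.smul_mem _ _ (Submodule.mem_span_singleton_self _)

section Field

variable {K : Type*} [Field K]

theorem range_shortRootCentralizerMap :
    LinearMap.range (shortRootCentralizerMap K) =
      K ∙ shortRootCentralizerMap K (Pi.single 0 1) ⊔ shortRootNilradical K := by
  have htop := (LinearMap.proj 0 : (Fin 4 → K) →ₗ[K] K).span_singleton_sup_ker_eq_top
    (x := Pi.single 0 1) (by simp)
  rw [shortRootNilradical, ← Set.image_singleton, ← Submodule.map_span, ← Submodule.map_sup, htop,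
    LinearMap.range_eq_map]

theorem finrank_ker_ad_shortRootVector [NeZero (2 : K)] :
    finrank K (LinearMap.ker (LieAlgebra.ad K _ (shortRootVector K))) = 4 := by
  rw [ker_ad_shortRootVector, LinearMap.finrank_range_of_inj shortRootCentralizerMap_injective,
    finrank_fin_fun]

theorem finrank_shortRootNilradical : finrank K (shortRootNilradical K) = 3 := by
  have hproj : (LinearMap.proj 0 : (Fin 4 → K) →ₗ[K] K) ≠ 0 := fun h ↦ by
    simpa using LinearMap.congr_fun h 1
  have hker := Module.Dual.finrank_ker_add_one_of_ne_zero hproj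
  rw [finrank_fin_fun] at hker
  rw [shortRootNilradical,
    ((Submodule.equivMapOfInjective _ shortRootCentralizerMap_injective _).finrank_eq).symm]
  lia

theorem irregularLocus_shortRootVector [NeZero (2 : K)] :
    irregularLocus K 2 (shortRootVector K) = shortRootNilradical K := by
  have hcentralizer := (Submodule.finrank_mono (shortRootNilradical_inf_ker_ad_le (R := K))).trans
    (finrank_span_le_card {shortRootVector K})
  rw [Set.toFinset_singleton, Finset.card_singleton] at hcentralizer
  exact irregularLocus_eq_of_abelian_hyperplane
    (fun _ hu _ hv ↦ lie_eq_zero_of_mem_shortRootNilradical hu hv)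
    (ker_ad_shortRootVector.trans range_shortRootCentralizerMap) (by lia)
    (by rw [finrank_shortRootNilradical]; lia)

end Field

end ShortRoot

theorem so5_subregular_irregular_locus_codim_one_general
    (k : Type*) [Field k] [IsAlgClosed k] [NeZero (2 : k)]
    (J : Matrix (Fin 5) (Fin 5) k) (hJsymm : J.IsSymm) (hJunit : IsUnit J) :
    ∃ x : ↥(skewAdjointMatricesLieSubalgebra J),
      IsNilpotent (x : Matrix (Fin 5) (Fin 5) k) ∧
      finrank k (LinearMap.ker (LieAlgebra.ad k _ x)) = 4 ∧
      ∃ W : Submodule k ↥(skewAdjointMatricesLieSubalgebra J),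
        W ≤ LinearMap.ker (LieAlgebra.ad k _ x) ∧ finrank k W = 3 ∧
          irregularLocus k 2 x = W := by
  obtain ⟨P, hP, rfl⟩ := exists_isUnit_transpose_mul_mul_eq antidiagonalForm_isSymm
    (.of_mul_eq_one _ antidiagonalForm_mul_self) hJsymm hJunit
  let e := skewAdjointMatricesLieSubalgebraEquiv (antidiagonalForm 5 k) P hP.invertible
  refine ⟨e (shortRootVector k),
    isNilpotent_skewAdjointMatricesLieSubalgebraEquiv_apply _ P _ isNilpotent_shortRootVector, ?_,
    (shortRootNilradical k).map (e.toLinearEquiv : _ →ₗ[k] _), ?_, ?_, ?_⟩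
  · rw [ker_ad_lieEquiv_apply, LinearEquiv.finrank_map_eq, finrank_ker_ad_shortRootVector]
  · rw [ker_ad_lieEquiv_apply, ker_ad_shortRootVector]
    exact Submodule.map_mono LinearMap.map_le_range
  · rw [LinearEquiv.finrank_map_eq, finrank_shortRootNilradical]
  · rw [irregularLocus_lieEquiv_apply, irregularLocus_shortRootVector]
    rfl

/-- Let `a = so₅ (k)` be the orthogonal Lie algebra in dimension `5`
(the `5 × 5` matrices skew-adjoint with respect to a nondegenerate symmetric bilinear form
with Gram matrix `J`), a simple Lie algebra of type `B₂`, of dimension `10` and rank `2`.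
There is a nilpotent element `x ∈ a` with `dim a_x = 4` (a subregular nilpotent element)
such that `I(a_x) = {y ∈ a_x | dim (a_x)_y > 2}` is a 3-dimensional linear subspace of
`a_x`; in particular `codim_{a_x} I(a_x) = 1`. -/
theorem so5_subregular_irregular_locus_codim_one
    (k : Type*) [Field k] [IsAlgClosed k] [CharZero k]
    (J : Matrix (Fin 5) (Fin 5) k) (hJsymm : J.IsSymm) (hJunit : IsUnit J) :
    ∃ x : ↥(skewAdjointMatricesLieSubalgebra J),
      IsNilpotent (x : Matrix (Fin 5) (Fin 5) k) ∧
      Module.finrank k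
          ↥(LinearMap.ker (LieAlgebra.ad k ↥(skewAdjointMatricesLieSubalgebra J) x)) = 4 ∧
      ∃ W : Submodule k ↥(skewAdjointMatricesLieSubalgebra J),
        W ≤ LinearMap.ker (LieAlgebra.ad k ↥(skewAdjointMatricesLieSubalgebra J) x) ∧
        Module.finrank k ↥W = 3 ∧
        {y : ↥(skewAdjointMatricesLieSubalgebra J) |
            y ∈ LinearMap.ker (LieAlgebra.ad k ↥(skewAdjointMatricesLieSubalgebra J) x) ∧
            2 < Module.finrank k
                ↥(LinearMap.ker (LieAlgebra.ad k ↥(skewAdjointMatricesLieSubalgebra J) x)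
                  ⊓ LinearMap.ker (LieAlgebra.ad k ↥(skewAdjointMatricesLieSubalgebra J) y))}
          = (↑W : Set ↥(skewAdjointMatricesLieSubalgebra J)) := by
  exact so5_subregular_irregular_locus_codim_one_general k J hJsymm hJunit
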